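/- For every pair ([k₁],[k₂]) of objects of Δ × Δ, the nerve of the comma category (diag ↓ ([k₁],[k₂])) is contractible (weakly equivalent to a point); consequently the diagonal functor diag : Δ → Δ × Δ is initial. -/

import Mathlib

open CategoryTheory SimplexCategory

/-- A simplicial set is weakly contractible iff its geometric realization is
homotopy equivalent to a point (realizations are CW complexes, so this agrees
with weak contractibility by Whitehead's theorem). -/
def WeaklyContractibleSSet (K : SSet.{0}) : Prop :=
  Nonempty (ContinuousMap.HomotopyEquiv (SSet.toTop.obj K) (TopCat.of PUnit.{1}))

/-!
An endofunctor `F` of a category `C` with natural transformations `𝟭 ⟶ F ⟵ const c` contracts the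
nerve of `C`. On `(diag ↓ ([k₁],[k₂]))` such an `F` sends a pair of monotone maps `[n] → [kᵢ]` to
its extension along `[n] ⊂ [0] ⋆ [n]` with value `0` at the new least element, and `c` is the pair
of maps `[0] → [kᵢ]` with value `0`.

A natural transformation gives a simplicial homotopy of nerves. Realizing it takes a continuous map
`|X| × [0, 1] → |X ⊗ Δ[1]|`, which is glued from the inverses of the homeomorphisms
`|Δ[p] ⊗ Δ[q]| ≃ₜ |Δ[p]| × |Δ[q]|`. A point of `|Δ[p] ⊗ Δ[q]|` is a probability vector on
`[p] × [q]` supported on a chain, so the bijectivity of these comparison maps says that any two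
probability vectors on `[p]` and `[q]` have exactly one coupling supported on a chain.
-/

section Simplex

variable {P Q : Type*} [Fintype P] [Fintype Q]

theorem stdSimplex_map_apply [DecidableEq Q] (f : P → Q) (μ : stdSimplex ℝ P) (y : Q) :
    stdSimplex.map f μ y = ∑ x with f x = y, μ x :=
  FunOnFinite.linearMap_apply_apply ..

theorem stdSimplex_map_const [DecidableEq Q] (y : Q)
    (μ : stdSimplex ℝ P) : stdSimplex.map (fun _ ↦ y) μ = stdSimplex.vertex y := by
  ext y'
  rw [stdSimplex_map_apply, stdSimplex.vertex_coe, Pi.single_apply]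
  split_ifs with h
  · simp [h]
  · simp [Ne.symm h]

theorem stdSimplex_map_fst_apply (μ : stdSimplex ℝ (P × Q)) (x : P) :
    stdSimplex.map Prod.fst μ x = ∑ y, μ (x, y) := by
  classical
  simp [stdSimplex_map_apply, Finset.sum_filter, Fintype.sum_prod_type_right]

theorem stdSimplex_map_snd_apply (μ : stdSimplex ℝ (P × Q)) (y : Q) :
    stdSimplex.map Prod.snd μ y = ∑ x, μ (x, y) := by
  classical
  simp [stdSimplex_map_apply, Finset.sum_filter, Fintype.sum_prod_type]

theorem stdSimplex_map_apply_of_injective {f : P → Q} (hf : Function.Injective f)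
    (μ : stdSimplex ℝ P) (x : P) : stdSimplex.map f μ (f x) = μ x := by
  classical
  have hfiber : ({x' | f x' = f x} : Finset P) = {x} := by ext; simp [hf.eq_iff]
  rw [stdSimplex_map_apply, hfiber, Finset.sum_singleton]

theorem stdSimplex_map_injective {f : P → Q} (hf : Function.Injective f) :
    Function.Injective (stdSimplex.map (S := ℝ) f) := fun μ ν h ↦ by
  ext x
  rw [← stdSimplex_map_apply_of_injective hf, h, stdSimplex_map_apply_of_injective hf]

theorem support_stdSimplex_map (f : P → Q) (μ : stdSimplex ℝ P) :
    Function.support (stdSimplex.map f μ) = f '' Function.support μ := by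
  classical
  ext y
  simp only [Function.mem_support, stdSimplex_map_apply, ne_eq, Set.mem_image,
    Finset.sum_eq_zero_iff_of_nonneg fun x _ ↦ stdSimplex.zero_le μ x, Finset.mem_filter,
    Finset.mem_univ, true_and, not_forall]
  tauto

theorem isChain_support_stdSimplex_map [LinearOrder P] [PartialOrder Q] {f : P → Q}
    (hf : Monotone f) (μ : stdSimplex ℝ P) :
    IsChain (· ≤ ·) (Function.support (stdSimplex.map f μ)) :=
  hf.isChain_range.mono <| support_stdSimplex_map f μ ▸ Set.image_subset_range _ _

theorem exists_stdSimplex_map_eq {f : P → Q} (hf : Function.Injective f)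
    {μ : stdSimplex ℝ Q} (hμ : Function.support μ ⊆ Set.range f) :
    ∃ ν : stdSimplex ℝ P, stdSimplex.map f ν = μ := by
  have hzero : ∀ y ∉ Set.range f, μ y = 0 := fun y hy ↦ by_contra fun h ↦ hy (hμ h)
  refine ⟨⟨μ ∘ f, fun x ↦ stdSimplex.zero_le μ (f x), ?_⟩, ?_⟩
  · rw [← stdSimplex.sum_eq_one μ]
    exact Fintype.sum_of_injective f hf _ _ hzero fun _ ↦ rfl
  · ext y
    by_cases hy : y ∈ Set.range f
    · obtain ⟨x, rfl⟩ := hy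
      exact stdSimplex_map_apply_of_injective hf _ x
    · rw [hzero y hy, ← Function.notMem_support, support_stdSimplex_map]
      exact fun h ↦ hy (Set.image_subset_range _ _ h)

theorem exists_orderEmbedding_range_eq_of_isChain {P : Type*} [PartialOrder P] {S : Set P}
    [Finite S] (hS : S.Nonempty) (hc : IsChain (· ≤ ·) S) :
    ∃ (n : ℕ) (c : Fin (n + 1) ↪o P), Set.range c = S := by
  classical
  let := hc.linearOrder
  have := hS.to_subtype
  let := Fintype.ofFinite S
  obtain ⟨n, hn⟩ := Nat.exists_eq_succ_of_ne_zero (Fintype.card_ne_zero (α := S))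
  let e : Fin (n + 1) ≃o S := monoEquivOfFin S hn
  refine ⟨n, e.toOrderEmbedding.trans (OrderEmbedding.subtype S), ?_⟩
  exact (e.surjective.range_comp Subtype.val).trans Subtype.range_coe

theorem exists_orderEmbedding_stdSimplex_map_eq [PartialOrder P] {μ : stdSimplex ℝ P}
    (hμ : IsChain (· ≤ ·) (Function.support μ)) :
    ∃ (n : ℕ) (c : Fin (n + 1) ↪o P) (p : stdSimplex ℝ (Fin (n + 1))),
      (∀ i, p i ≠ 0) ∧ stdSimplex.map c p = μ := by
  have hne : (Function.support μ).Nonempty := by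
    by_contra! h
    simpa [Function.support_eq_empty_iff.1 h] using stdSimplex.sum_eq_one μ
  obtain ⟨n, c, hc⟩ := exists_orderEmbedding_range_eq_of_isChain hne hμ
  obtain ⟨p, rfl⟩ := exists_stdSimplex_map_eq c.injective hc.ge
  refine ⟨n, c, p, fun i ↦ ?_, rfl⟩
  rw [← stdSimplex_map_apply_of_injective c.injective]
  exact hc.le ⟨i, rfl⟩

theorem eq_of_stdSimplex_map_orderEmbedding_eq [PartialOrder P] {m n : ℕ}
    {c : Fin (m + 1) ↪o P} {d : Fin (n + 1) ↪o P}
    {p : stdSimplex ℝ (Fin (m + 1))} {q : stdSimplex ℝ (Fin (n + 1))}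
    (hp : ∀ i, p i ≠ 0) (hq : ∀ i, q i ≠ 0) (h : stdSimplex.map c p = stdSimplex.map d q) :
    ∃ hmn : m = n, hmn ▸ c = d ∧ hmn ▸ p = q := by
  have hrange : Set.range c = Set.range d := by
    have hp' : Function.support p = Set.univ := Set.eq_univ_of_forall hp
    have hq' : Function.support q = Set.univ := Set.eq_univ_of_forall hq
    rw [← Set.image_univ, ← hp', ← support_stdSimplex_map, h, support_stdSimplex_map, hq',
      Set.image_univ]
  obtain rfl : m = n := by
    have := congrArg Set.ncard hrange
    rw [← Set.image_univ, ← Set.image_univ, Set.ncard_image_of_injective _ c.injective,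
      Set.ncard_image_of_injective _ d.injective] at this
    simpa using this
  obtain rfl : c = d := OrderEmbedding.range_inj.1 hrange
  exact ⟨rfl, rfl, stdSimplex_map_injective c.injective h⟩

theorem exists_lt_of_stdSimplex_map_eq {f : P → Q} {μ ν : stdSimplex ℝ P}
    (h : stdSimplex.map f μ = stdSimplex.map f ν) {x : P} (hx : μ x < ν x) :
    ∃ x', f x' = f x ∧ ν x' < μ x' := by
  classical
  by_contra! hle
  refine (DFunLike.congr_fun h (f x)).not_lt ?_
  rw [stdSimplex_map_apply, stdSimplex_map_apply]
  exact Finset.sum_lt_sum (fun x' hx' ↦ hle x' (Finset.mem_filter.1 hx').2) ⟨x, by simp, hx⟩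

end Simplex

section Coupling

section Unique

variable {P Q : Type*} [Fintype P] [Fintype Q] [LinearOrder P] [LinearOrder Q]
  {μ ν : stdSimplex ℝ (P × Q)}

theorem apply_le_apply_of_isChain_support (hμ : IsChain (· ≤ ·) (Function.support μ))
    (hfst : stdSimplex.map Prod.fst μ = stdSimplex.map Prod.fst ν)
    (hsnd : stdSimplex.map Prod.snd μ = stdSimplex.map Prod.snd ν)
    {z : P × Q} (hz : ∀ w < z, μ w = ν w) : ν z ≤ μ z := by
  -- An excess of `ν` at `z` forces excesses of `μ` elsewhere in the row and in the column of `z`.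
  -- Minimality of `z` puts these to its right and above it, where they are incomparable.
  obtain ⟨a, b⟩ := z
  by_contra! hlt
  have mem_support {w} (hw : ν w < μ w) : w ∈ Function.support μ :=
    ((stdSimplex.zero_le ν w).trans_lt hw).ne'
  obtain ⟨⟨a, b'⟩, rfl, hrow⟩ := exists_lt_of_stdSimplex_map_eq hfst hlt
  obtain ⟨⟨a', b⟩, rfl, hcol⟩ := exists_lt_of_stdSimplex_map_eq hsnd hlt
  dsimp only at *
  have hb : b < b' := by
    by_contra! h
    rcases h.eq_or_lt with rfl | h
    · exact hlt.not_gt hrow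
    · exact hrow.ne' (hz _ (Prod.mk_lt_mk_iff_right.2 h))
  have ha : a < a' := by
    by_contra! h
    rcases h.eq_or_lt with rfl | h
    · exact hlt.not_gt hcol
    · exact hcol.ne' (hz _ (Prod.mk_lt_mk_iff_left.2 h))
  rcases hμ.total (mem_support hrow) (mem_support hcol) with h | h
  · exact h.2.not_gt hb
  · exact h.1.not_gt ha

theorem eq_of_isChain_support
    (hμ : IsChain (· ≤ ·) (Function.support μ)) (hν : IsChain (· ≤ ·) (Function.support ν))
    (hfst : stdSimplex.map Prod.fst μ = stdSimplex.map Prod.fst ν)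
    (hsnd : stdSimplex.map Prod.snd μ = stdSimplex.map Prod.snd ν) : μ = ν := by
  refine stdSimplex.ext <| funext fun z ↦ ?_
  induction z using WellFoundedLT.induction with
  | ind z ih =>
    exact (apply_le_apply_of_isChain_support hν hfst.symm hsnd.symm
      fun w hw ↦ (ih w hw).symm).antisymm
        (apply_le_apply_of_isChain_support hμ hfst hsnd ih)

end Unique

section Existence

theorem sum_univ_succ_sub_castSucc {M : Type*} [AddCommGroup M] {n : ℕ} (f : Fin (n + 1) → M) :
    ∑ i : Fin n, (f i.succ - f i.castSucc) = f (Fin.last n) - f 0 := by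
  rw [Finset.sum_sub_distrib, sub_eq_sub_iff_add_eq_add, add_comm, ← Fin.sum_univ_succ,
    Fin.sum_univ_castSucc f, add_comm]

theorem partialSum_last {M : Type*} [AddCommMonoid M] {n : ℕ} (f : Fin n → M) :
    Fin.partialSum f (Fin.last n) = ∑ i, f i := by
  simp [Fin.partialSum, List.sum_ofFn, List.take_of_length_le]

theorem monotone_partialSum {M : Type*} [AddMonoid M] [Preorder M] [AddLeftMono M] {n : ℕ}
    {f : Fin n → M} (hf : ∀ i, 0 ≤ f i) : Monotone (Fin.partialSum f) :=
  Fin.monotone_iff_le_succ.2 fun i ↦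
    (le_add_of_nonneg_right (hf i)).trans_eq (Fin.partialSum_succ f i).symm

section Comonotone

variable {M : Type*} [AddCommGroup M] [LinearOrder M] {m n : ℕ}

/-- The increments of the function `min (F i) (G j)` over unit squares. When `F` and `G` are the
cumulative distribution functions of two probability vectors, these are the masses of the
comonotone coupling of the two vectors. -/
def comonotoneMass (F : Fin (m + 1) → M) (G : Fin (n + 1) → M) (z : Fin m × Fin n) : M :=
  (min (F z.1.succ) (G z.2.succ) - min (F z.1.castSucc) (G z.2.succ)) -
    (min (F z.1.succ) (G z.2.castSucc) - min (F z.1.castSucc) (G z.2.castSucc))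

variable {F : Fin (m + 1) → M} {G : Fin (n + 1) → M}

theorem comonotoneMass_swap (z : Fin m × Fin n) :
    comonotoneMass G F z.swap = comonotoneMass F G z := by
  simp only [comonotoneMass, Prod.fst_swap, Prod.snd_swap, min_comm (G _)]
  abel

theorem comonotoneMass_nonneg [IsOrderedAddMonoid M] (hF : Monotone F) (hG : Monotone G)
    (z : Fin m × Fin n) : 0 ≤ comonotoneMass F G z := by
  have hFz := hF z.1.castSucc_lt_succ.le
  have hGz := hG z.2.castSucc_lt_succ.le
  unfold comonotoneMass
  grind

theorem lt_of_comonotoneMass_ne_zero (hF : Monotone F) (hG : Monotone G) {z : Fin m × Fin n}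
    (hz : comonotoneMass F G z ≠ 0) : F z.1.castSucc < G z.2.succ := by
  have hFz := hF z.1.castSucc_lt_succ.le
  have hGz := hG z.2.castSucc_lt_succ.le
  contrapose! hz
  unfold comonotoneMass
  grind

theorem sum_comonotoneMass_right (hF : Monotone F) (h₀ : F 0 = G 0)
    (h₁ : F (Fin.last m) = G (Fin.last n)) (i : Fin m) :
    ∑ j, comonotoneMass F G (i, j) = F i.succ - F i.castSucc := by
  have hG₀ (i) : G 0 ≤ F i := h₀.ge.trans (hF (Fin.zero_le i))
  have hG₁ (i) : F i ≤ G (Fin.last n) := (hF (Fin.le_last i)).trans h₁.le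
  rw [show ∑ j, comonotoneMass F G (i, j) = _ from sum_univ_succ_sub_castSucc fun j ↦
    min (F i.succ) (G j) - min (F i.castSucc) (G j)]
  simp only [min_eq_left (hG₁ _), min_eq_right (hG₀ _), sub_self, sub_zero]

theorem sum_comonotoneMass_left (hG : Monotone G) (h₀ : F 0 = G 0)
    (h₁ : F (Fin.last m) = G (Fin.last n)) (j : Fin n) :
    ∑ i, comonotoneMass F G (i, j) = G j.succ - G j.castSucc := by
  rw [← sum_comonotoneMass_right hG h₀.symm h₁.symm]
  exact Finset.sum_congr rfl fun i _ ↦ (comonotoneMass_swap (i, j)).symm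

theorem isChain_support_comonotoneMass (hF : Monotone F) (hG : Monotone G) :
    IsChain (· ≤ ·) (Function.support (comonotoneMass F G)) := by
  have not_crossing {z w : Fin m × Fin n} (hz : comonotoneMass F G z ≠ 0)
      (hw : comonotoneMass F G w ≠ 0) (h₁ : z.1 < w.1) : ¬ w.2 < z.2 := fun h₂ ↦ by
    have h := calc
      G z.2.castSucc < F z.1.succ := lt_of_comonotoneMass_ne_zero hG hF
        (z := z.swap) (by rwa [comonotoneMass_swap])
      _ ≤ F w.1.castSucc := hF (by simpa using h₁)
      _ < G w.2.succ := lt_of_comonotoneMass_ne_zero hF hG hw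
      _ ≤ G z.2.castSucc := hG (by simpa using h₂)
    exact h.false
  intro z hz w hw _
  have hzw := not_crossing hz hw
  have hwz := not_crossing hw hz
  simp only [Prod.le_def]
  grind

end Comonotone

theorem exists_isChain_support_stdSimplex_map_eq {m n : ℕ}
    (μ : stdSimplex ℝ (Fin m)) (ν : stdSimplex ℝ (Fin n)) :
    ∃ π : stdSimplex ℝ (Fin m × Fin n), IsChain (· ≤ ·) (Function.support π) ∧
      stdSimplex.map Prod.fst π = μ ∧ stdSimplex.map Prod.snd π = ν := by
  have hF := monotone_partialSum (stdSimplex.zero_le μ)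
  have hG := monotone_partialSum (stdSimplex.zero_le ν)
  have h₀ : Fin.partialSum μ 0 = Fin.partialSum ν 0 := by simp only [Fin.partialSum_zero]
  have h₁ : Fin.partialSum μ (Fin.last m) = Fin.partialSum ν (Fin.last n) := by
    simp only [partialSum_last, stdSimplex.sum_eq_one]
  have sum_right (i : Fin m) :
      ∑ j, comonotoneMass (Fin.partialSum μ) (Fin.partialSum ν) (i, j) = μ i := by
    rw [sum_comonotoneMass_right hF h₀ h₁, Fin.partialSum_succ, add_sub_cancel_left]
  have sum_left (j : Fin n) :
      ∑ i, comonotoneMass (Fin.partialSum μ) (Fin.partialSum ν) (i, j) = ν j := by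
    rw [sum_comonotoneMass_left hG h₀ h₁, Fin.partialSum_succ, add_sub_cancel_left]
  refine ⟨⟨comonotoneMass (Fin.partialSum μ) (Fin.partialSum ν), comonotoneMass_nonneg hF hG, ?_⟩,
    isChain_support_comonotoneMass hF hG, ?_, ?_⟩
  · simp only [Fintype.sum_prod_type, sum_right, stdSimplex.sum_eq_one]
  · ext i
    exact (stdSimplex_map_fst_apply _ i).trans (sum_right i)
  · ext j
    exact (stdSimplex_map_snd_apply _ j).trans (sum_left j)

end Existence

end Coupling

section Realization

open Opposite Simplicial

universe u

variable {X Y : SSet.{u}} {n m : SimplexCategory}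

/-- The characteristic map of a simplex of `X`, from the standard topological simplex to the
geometric realization of `X`. -/
noncomputable def characteristicMap (x : X.obj (op n)) : C(stdSimplex ℝ (Fin (n.len + 1)), |X|) :=
  (SSet.toTop.map (SSet.yonedaEquiv.symm x)).hom.comp
    (n.toTopHomeo.symm : C(_, |SSet.stdSimplex.obj n|))

theorem toTop_map_characteristicMap (f : X ⟶ Y) (x : X.obj (op n))
    (p : stdSimplex ℝ (Fin (n.len + 1))) :
    SSet.toTop.map f (characteristicMap x p) = characteristicMap (f.app _ x) p := by
  rw [characteristicMap, characteristicMap, ← SSet.yonedaEquiv_symm_comp, Functor.map_comp]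
  rfl

theorem characteristicMap_map (f : n ⟶ m) (x : X.obj (op m))
    (p : stdSimplex ℝ (Fin (n.len + 1))) :
    characteristicMap (X.map f.op x) p = characteristicMap x (stdSimplex.map f p) := by
  rw [characteristicMap, ← SSet.yonedaEquiv_symm_naturality_left, Functor.map_comp]
  exact congrArg (SSet.toTop.map (SSet.yonedaEquiv.symm x))
    (SimplexCategory.toTopHomeo_symm_naturality_apply f p).symm

theorem toTopHomeo_characteristicMap {k : SimplexCategory}
    (x : (SSet.stdSimplex.{u}.obj k).obj (op n)) (p : stdSimplex ℝ (Fin (n.len + 1))) :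
    k.toTopHomeo (characteristicMap x p) = stdSimplex.map (SSet.stdSimplex.objEquiv x) p := by
  have h : SSet.yonedaEquiv.symm x = SSet.stdSimplex.map (SSet.stdSimplex.objEquiv x) := rfl
  rw [characteristicMap, h]
  refine (SimplexCategory.toTopHomeo_naturality_apply _ _).trans ?_
  exact congrArg _ (n.toTopHomeo.apply_symm_apply p)

theorem toSSetObjEquiv_homEquiv_app {Z : TopCat.{u}} (g : |X| ⟶ Z) (x : X.obj (op n)) :
    Z.toSSetObjEquiv _ ((sSetTopAdj.homEquiv X Z g).app _ x) =
      g.hom.comp (characteristicMap x) := by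
  have hunit := sSetTopAdj_unit_app_app_down X (op n) x
  ext p
  exact congrArg (fun e : SimplexCategory.toTop.obj n ⟶ |X| ↦ g (e (ULift.up p))) hunit

theorem toTop_hom_ext {Z : TopCat.{u}} {f g : |X| ⟶ Z}
    (h : ∀ (n : SimplexCategory) (x : X.obj (op n)) p,
      f (characteristicMap x p) = g (characteristicMap x p)) : f = g := by
  refine (sSetTopAdj.homEquiv X Z).injective (SSet.hom_ext fun ⟨n⟩ ↦
    ConcreteCategory.hom_ext _ _ fun x ↦ ?_)
  refine (Z.toSSetObjEquiv _).injective ?_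
  rw [toSSetObjEquiv_homEquiv_app, toSSetObjEquiv_homEquiv_app]
  exact ContinuousMap.ext (h n x)

theorem exists_characteristicMap_eq (z : |X|) :
    ∃ (n : SimplexCategory) (x : X.obj (op n)) (p : stdSimplex ℝ (Fin (n.len + 1))),
      characteristicMap x p = z := by
  -- Maps into an indiscrete space are arbitrary functions, so `toTop_hom_ext` separates subsets.
  let : TopologicalSpace (ULift.{u} Prop) := ⊤
  let indicator (s : Set |X|) : |X| ⟶ TopCat.of (ULift.{u} Prop) :=
    TopCat.ofHom ⟨fun z ↦ .up (z ∈ s), continuous_top⟩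
  let S : Set |X| := {z | ∃ (n : SimplexCategory) (x : X.obj (op n)) (p : _),
    characteristicMap x p = z}
  have h : indicator S = indicator Set.univ :=
    toTop_hom_ext fun n x p ↦ congrArg ULift.up (eq_true ⟨n, x, p, rfl⟩)
  have hz : (z ∈ S) = (z ∈ Set.univ) := congrArg ULift.down (ConcreteCategory.congr_hom h z)
  exact hz.mpr trivial

theorem exists_nonDegenerate_characteristicMap_eq (z : |X|) :
    ∃ (n : ℕ) (x : X.nonDegenerate n) (p : stdSimplex ℝ (Fin (n + 1))),
      (∀ i, p i ≠ 0) ∧ characteristicMap x.1 p = z := by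
  obtain ⟨⟨m⟩, x, p, rfl⟩ := exists_characteristicMap_eq z
  obtain ⟨k, c, p, hp, rfl⟩ := exists_orderEmbedding_stdSimplex_map_eq
    (isChain_of_trichotomous (Function.support p))
  let face : ⦋k⦌ ⟶ ⦋m⦌ := SimplexCategory.Hom.mk c.toOrderHom
  obtain ⟨n, f, hf, y, hy⟩ := X.exists_nonDegenerate (X.map face.op x)
  refine ⟨n, y, stdSimplex.map f p, fun i ↦ ?_, ?_⟩
  · obtain ⟨j, rfl⟩ := SimplexCategory.epi_iff_surjective.1 hf i
    rw [← Function.mem_support, support_stdSimplex_map]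
    exact Set.mem_image_of_mem f (hp j)
  · exact (characteristicMap_map f y.1 p).symm.trans (hy ▸ characteristicMap_map face x p)

instance compactSpace_toTop [X.Finite] : CompactSpace |X| := by
  let cell (x : X.N) := Set.range (characteristicMap x.simplex)
  have hcover : ⋃ x, cell x = Set.univ := by
    refine Set.eq_univ_of_forall fun z ↦ ?_
    obtain ⟨n, x, p, -, rfl⟩ := exists_nonDegenerate_characteristicMap_eq z
    exact Set.mem_iUnion.2 ⟨SSet.N.mk x.1 x.2, p, rfl⟩
  exact ⟨hcover ▸ isCompact_iUnion fun x ↦ isCompact_range (map_continuous _)⟩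

end Realization

section Product

open Opposite Simplicial MonoidalCategory

universe u

variable (p q : ℕ)

/-- The comparison map from the realization of `Δ[p] ⊗ Δ[q]` to the product of the standard
topological simplices. -/
noncomputable def prodStdSimplexComparison :
    C(|(Δ[p] ⊗ Δ[q] : SSet.{u})|, stdSimplex ℝ (Fin (p + 1)) × stdSimplex ℝ (Fin (q + 1))) where
  toFun z := (⦋p⦌.toTopHomeo (SSet.toTop.map (SemiCartesianMonoidalCategory.fst Δ[p] Δ[q]) z),
    ⦋q⦌.toTopHomeo (SSet.toTop.map (SemiCartesianMonoidalCategory.snd Δ[p] Δ[q]) z))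

variable {p q}

theorem prodStdSimplexComparison_characteristicMap {n : ℕ} (x : (Δ[p] ⊗ Δ[q] : SSet.{u}) _⦋n⦌)
    (w : stdSimplex ℝ (Fin (n + 1))) :
    prodStdSimplexComparison p q (characteristicMap x w) =
      (stdSimplex.map Prod.fst (stdSimplex.map (SSet.prodStdSimplex.objEquiv x) w),
        stdSimplex.map Prod.snd (stdSimplex.map (SSet.prodStdSimplex.objEquiv x) w)) := by
  rw [stdSimplex.map_comp_apply, stdSimplex.map_comp_apply]
  refine Prod.ext ?_ ?_
  · change ⦋p⦌.toTopHomeo (SSet.toTop.map (SemiCartesianMonoidalCategory.fst Δ[p] Δ[q])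
      (characteristicMap x w)) = _
    rw [toTop_map_characteristicMap]
    exact toTopHomeo_characteristicMap (k := ⦋p⦌) (n := ⦋n⦌) x.1 w
  · change ⦋q⦌.toTopHomeo (SSet.toTop.map (SemiCartesianMonoidalCategory.snd Δ[p] Δ[q])
      (characteristicMap x w)) = _
    rw [toTop_map_characteristicMap]
    exact toTopHomeo_characteristicMap (k := ⦋q⦌) (n := ⦋n⦌) x.2 w

theorem prodStdSimplexComparison_injective :
    Function.Injective (prodStdSimplexComparison.{u} p q) := by
  intro z z' h
  obtain ⟨m, x, v, hv, rfl⟩ := exists_nonDegenerate_characteristicMap_eq z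
  obtain ⟨n, y, w, hw, rfl⟩ := exists_nonDegenerate_characteristicMap_eq z'
  let c := OrderEmbedding.ofStrictMono _
    ((SSet.prodStdSimplex.nonDegenerate_iff_strictMono_objEquiv x.1).1 x.2)
  let d := OrderEmbedding.ofStrictMono _
    ((SSet.prodStdSimplex.nonDegenerate_iff_strictMono_objEquiv y.1).1 y.2)
  rw [prodStdSimplexComparison_characteristicMap, prodStdSimplexComparison_characteristicMap,
    Prod.mk_inj] at h
  have hcd : stdSimplex.map c v = stdSimplex.map d w :=
    eq_of_isChain_support (isChain_support_stdSimplex_map c.monotone v)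
      (isChain_support_stdSimplex_map d.monotone w) h.1 h.2
  obtain ⟨rfl, hc, rfl⟩ := eq_of_stdSimplex_map_orderEmbedding_eq hv hw hcd
  have hxy : x = y := Subtype.ext <| SSet.prodStdSimplex.objEquiv.injective <|
    OrderHom.ext _ _ (congrArg (fun e : _ ↪o _ ↦ ⇑e) hc)
  rw [hxy]

theorem prodStdSimplexComparison_surjective :
    Function.Surjective (prodStdSimplexComparison.{u} p q) := by
  rintro ⟨μ, ν⟩
  obtain ⟨π, hπ, rfl, rfl⟩ := exists_isChain_support_stdSimplex_map_eq μ ν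
  obtain ⟨n, c, w, -, rfl⟩ := exists_orderEmbedding_stdSimplex_map_eq hπ
  exact ⟨characteristicMap (SSet.prodStdSimplex.objEquiv.symm c.toOrderHom) w,
    by rw [prodStdSimplexComparison_characteristicMap, Equiv.apply_symm_apply]; rfl⟩

/-- The realization of `Δ[p] ⊗ Δ[q]` is the product of the standard topological simplices. -/
noncomputable def prodStdSimplexHomeomorph (p q : ℕ) :
    |(Δ[p] ⊗ Δ[q] : SSet.{u})| ≃ₜ stdSimplex ℝ (Fin (p + 1)) × stdSimplex ℝ (Fin (q + 1)) :=
  (prodStdSimplexComparison p q).continuous.homeoOfEquivCompactToT2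
    (f := .ofBijective _ ⟨prodStdSimplexComparison_injective, prodStdSimplexComparison_surjective⟩)

end Product

section Cylinder

open Opposite Simplicial MonoidalCategory

universe u

variable {X Y : SSet.{u}} {p p' q : ℕ}

theorem prodStdSimplexHomeomorph_whiskerRight (f : ⦋p⦌ ⟶ ⦋p'⦌) (z : |(Δ[p] ⊗ Δ[q] : SSet.{u})|) :
    prodStdSimplexHomeomorph p' q (SSet.toTop.map (SSet.stdSimplex.map f ▷ Δ[q]) z) =
      (prodStdSimplexHomeomorph p q z).map (stdSimplex.map f) id := by
  obtain ⟨⟨n⟩, x, w, rfl⟩ := exists_characteristicMap_eq z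
  rw [toTop_map_characteristicMap]
  refine (prodStdSimplexComparison_characteristicMap _ w).trans ?_
  refine .trans ?_ (congrArg _ (prodStdSimplexComparison_characteristicMap x w).symm)
  simp only [stdSimplex.map_comp_apply, Prod.map]
  rfl

theorem prodStdSimplexHomeomorph_symm_map (f : ⦋p⦌ ⟶ ⦋p'⦌) (w : stdSimplex ℝ (Fin (p + 1)))
    (t : stdSimplex ℝ (Fin (q + 1))) :
    (prodStdSimplexHomeomorph p' q).symm (stdSimplex.map f w, t) =
      SSet.toTop.map (SSet.stdSimplex.map f ▷ Δ[q])
        ((prodStdSimplexHomeomorph.{u} p q).symm (w, t)) := by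
  rw [Homeomorph.symm_apply_eq, prodStdSimplexHomeomorph_whiskerRight, Homeomorph.apply_symm_apply]
  rfl

variable (X q) in
/-- The canonical map `|X| × |Δ[q]| → |X ⊗ Δ[q]|`, curried. On the image of an `n`-simplex of `X`
it is the inverse of the homeomorphism from `|Δ[n] ⊗ Δ[q]|` to `|Δ[n]| × |Δ[q]|`. -/
noncomputable def cylinderMap :
    |X| ⟶ TopCat.of C(stdSimplex ℝ (Fin (q + 1)), |X ⊗ Δ[q]|) :=
  (sSetTopAdj.homEquiv _ _).symm
    { app n := ↾fun x ↦ (TopCat.toSSetObjEquiv _ n).symm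
        ((SSet.toTop.map (SSet.yonedaEquiv.symm x ▷ Δ[q])).hom.comp
          (prodStdSimplexHomeomorph n.unop.len q).symm : C(_, _)).curry
      naturality := by
        rintro ⟨⟨m⟩⟩ ⟨⟨n⟩⟩ ⟨f⟩
        ext x
        refine (TopCat.toSSetObjEquiv _ _).injective ?_
        ext w t
        change SSet.toTop.map (SSet.yonedaEquiv.symm (X.map f.op x) ▷ Δ[q])
            ((prodStdSimplexHomeomorph n q).symm (w, t)) =
          SSet.toTop.map (SSet.yonedaEquiv.symm x ▷ Δ[q])
            ((prodStdSimplexHomeomorph m q).symm (stdSimplex.map f w, t))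
        rw [prodStdSimplexHomeomorph_symm_map, ← SSet.yonedaEquiv_symm_naturality_left,
          MonoidalCategory.comp_whiskerRight, Functor.map_comp]
        rfl }

theorem cylinderMap_characteristicMap {n : ℕ} (x : X _⦋n⦌) (w : stdSimplex ℝ (Fin (n + 1)))
    (t : stdSimplex ℝ (Fin (q + 1))) :
    cylinderMap X q (characteristicMap x w) t =
      SSet.toTop.map (SSet.yonedaEquiv.symm x ▷ Δ[q])
        ((prodStdSimplexHomeomorph n q).symm (w, t)) := by
  have h := toSSetObjEquiv_homEquiv_app (cylinderMap X q) x
  rw [cylinderMap, Equiv.apply_symm_apply] at h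
  exact congrArg (· t) (DFunLike.congr_fun h.symm w)

theorem cylinderMap_vertex (z : |X|) (i : Fin (q + 1)) :
    cylinderMap X q z (stdSimplex.vertex i) =
      SSet.toTop.map (CartesianMonoidalCategory.lift (𝟙 X)
        (SSet.const (SSet.stdSimplex.obj₀Equiv.symm i))) z := by
  obtain ⟨⟨n⟩, x, w, rfl⟩ := exists_characteristicMap_eq z
  let vertexSimplex : (Δ[n] ⊗ Δ[q] : SSet.{u}) _⦋n⦌ :=
    (SSet.yonedaEquiv (𝟙 _),
      (SSet.const (SSet.stdSimplex.obj₀Equiv.symm i) : Δ[n] ⟶ Δ[q]).app _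
        (SSet.yonedaEquiv (𝟙 _)))
  have hvertex : (prodStdSimplexHomeomorph n q).symm (w, stdSimplex.vertex i) =
      characteristicMap vertexSimplex w := by
    refine (Homeomorph.symm_apply_eq _).2 (.trans ?_
      (prodStdSimplexComparison_characteristicMap vertexSimplex w).symm)
    rw [stdSimplex.map_comp_apply, stdSimplex.map_comp_apply, ← stdSimplex_map_const i w]
    refine Prod.ext ?_ rfl
    exact (stdSimplex.map_id_apply w).symm
  rw [cylinderMap_characteristicMap, hvertex, toTop_map_characteristicMap,
    toTop_map_characteristicMap]
  refine congrArg (characteristicMap · w) (Prod.ext ?_ rfl)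
  exact SSet.yonedaEquiv.apply_symm_apply x

theorem toTop_map_ι₀_homotopic_toTop_map_ι₁ (X : SSet.{u}) :
    (SSet.toTop.map (SSet.ι₀ (X := X))).hom.Homotopic (SSet.toTop.map (SSet.ι₁ (X := X))).hom :=
  let cylinder : C(unitInterval × |X|, |X ⊗ Δ[1]|) :=
    ⟨fun tz ↦ cylinderMap X 1 tz.2 (stdSimplexHomeomorphUnitInterval.symm tz.1), by fun_prop⟩
  have symm_zero : stdSimplexHomeomorphUnitInterval.symm 0 = stdSimplex.vertex 0 :=
    (Homeomorph.symm_apply_eq _).2 stdSimplexHomeomorphUnitInterval_zero.symm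
  have symm_one : stdSimplexHomeomorphUnitInterval.symm 1 = stdSimplex.vertex 1 :=
    (Homeomorph.symm_apply_eq _).2 stdSimplexHomeomorphUnitInterval_one.symm
  ⟨⟨cylinder, fun z ↦ (congrArg (cylinderMap X 1 z) symm_zero).trans (cylinderMap_vertex z 0),
    fun z ↦ (congrArg (cylinderMap X 1 z) symm_one).trans (cylinderMap_vertex z 1)⟩⟩

theorem toTop_map_homotopic {f g : X ⟶ Y} (H : SSet.Homotopy f g) :
    (SSet.toTop.map f).hom.Homotopic (SSet.toTop.map g).hom := by
  have h := (ContinuousMap.Homotopic.refl (SSet.toTop.map H.h).hom).comp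
    (toTop_map_ι₀_homotopic_toTop_map_ι₁ X)
  rwa [← TopCat.hom_comp, ← TopCat.hom_comp, ← Functor.map_comp, ← Functor.map_comp, H.h₀, H.h₁]
    at h

end Cylinder

section Nerve

open Opposite Simplicial MonoidalCategory

universe u v

theorem toTop_map_const {X Y : SSet.{u}} (y : Y _⦋0⦌) (z : |X|) :
    SSet.toTop.map (SSet.const y) z = characteristicMap y default := by
  obtain ⟨n, x, p, rfl⟩ := exists_characteristicMap_eq z
  rw [toTop_map_characteristicMap]
  refine (characteristicMap_map (n.const _ 0) y p).trans (congrArg _ ?_)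
  exact Subsingleton.elim _ _

variable {C D : Type u} [Category.{v} C] [Category.{v} D] {F G : C ⥤ D}

/-- The simplicial homotopy induced by a natural transformation `τ`, viewed as a functor from
`Fin 2 × C` to `D`. -/
def nerveHomotopy (τ : F ⟶ G) : SSet.Homotopy (nerveMap F) (nerveMap G) where
  h := { app n := ↾fun x ↦
          (Functor.prod' (SSet.stdSimplex.objEquiv x.2).toOrderHom.monotone.functor
            (x.1 : ComposableArrows C n.unop.len)) ⋙
            Functor.uncurry.obj (ComposableArrows.mk₁ τ) }
  h₀ := by
    ext n x
    refine Functor.hext (fun _ ↦ rfl) (fun i j f ↦ heq_of_eq ?_)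
    change ((ComposableArrows.mk₁ τ).map (𝟙 0)).app _ ≫ F.map _ = F.map _
    rw [CategoryTheory.Functor.map_id, NatTrans.id_app]
    exact Category.id_comp _
  h₁ := by
    ext n x
    refine Functor.hext (fun _ ↦ rfl) (fun i j f ↦ heq_of_eq ?_)
    change ((ComposableArrows.mk₁ τ).map (𝟙 1)).app _ ≫ G.map _ = G.map _
    rw [CategoryTheory.Functor.map_id, NatTrans.id_app]
    exact Category.id_comp _
  rel := by ext _ ⟨⟨_, ⟨⟩⟩, _⟩

theorem nerveMap_const (d : D) :
    nerveMap ((Functor.const C).obj d) = SSet.const (ComposableArrows.mk₀ d) := by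
  ext n x
  refine Functor.hext (fun _ ↦ rfl) fun i j f ↦ heq_of_eq ?_
  exact ((ComposableArrows.mk₀ d).map_id (0 : Fin 1)).symm

variable {F : C ⥤ C} {c : C}

theorem contractibleSpace_toTop_nerve_of_natTrans (α : 𝟭 C ⟶ F)
    (β : (Functor.const C).obj c ⟶ F) :
    ContractibleSpace |nerve C| := by
  have hα := toTop_map_homotopic (nerveHomotopy α)
  have hβ := toTop_map_homotopic (nerveHomotopy β)
  have hid : nerveMap (𝟭 C) = 𝟙 (nerve C) := rfl
  have hconst : (SSet.toTop.map (nerveMap ((Functor.const C).obj c))).hom =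
      ContinuousMap.const _
        (characteristicMap (X := nerve C) (n := ⦋0⦌) (ComposableArrows.mk₀ c) default) := by
    rw [nerveMap_const]
    exact ContinuousMap.ext (toTop_map_const _)
  rw [hid, CategoryTheory.Functor.map_id, TopCat.hom_id] at hα
  rw [hconst] at hβ
  exact (contractible_iff_id_nullhomotopic _).2 ⟨_, hα.trans hβ.symm⟩

theorem isConnected_of_natTrans (α : 𝟭 C ⟶ F) (β : (Functor.const C).obj c ⟶ F) :
    IsConnected C := by
  have : Nonempty C := ⟨c⟩
  have hc (x : C) : Zigzag x c := (Zigzag.of_hom (α.app x)).trans (Zigzag.of_inv (β.app x))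
  exact zigzag_isConnected fun x y ↦ (hc x).trans (hc y).symm

end Nerve

section Cone

open SSet.Augmented.StandardSimplex (shift)
open Simplicial

theorem shift_comp_δ_zero_comp_shift {m n : ℕ} {Δ : SimplexCategory} (f : ⦋m⦌ ⟶ ⦋n⦌)
    (g : ⦋n⦌ ⟶ Δ) : shift (f ≫ δ 0) ≫ shift g = shift (f ≫ g) := by
  ext i
  cases i using Fin.cases <;> rfl

theorem shift_δ_zero (n : ℕ) : shift (δ (0 : Fin (n + 2))) = 𝟙 ⦋n + 1⦌ := by
  ext i
  cases i using Fin.cases <;> rfl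

/-- The endofunctor `[n] ↦ [0] ⋆ [n]` of the simplex category, which adjoins a new least element. -/
def coneFunctor : SimplexCategory ⥤ SimplexCategory where
  obj n := ⦋n.len + 1⦌
  map {m n} f := shift (n := m.len) (f ≫ δ (n := n.len) 0)
  map_id n := shift_δ_zero n.len
  map_comp {l m n} f g :=
    (shift_comp_δ_zero_comp_shift (m := l.len) (n := m.len) f (g ≫ δ (n := n.len) 0)).symm

/-- The inclusion of the base into the cone. -/
def coneInclusion : 𝟭 SimplexCategory ⟶ coneFunctor where
  app n := δ (n := n.len) 0

/-- The inclusion of the apex into the cone. -/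
def coneApex : (Functor.const SimplexCategory).obj ⦋0⦌ ⟶ coneFunctor where
  app n := ⦋0⦌.const (coneFunctor.obj n) 0

/-- The comma category `(diag ↓ (n₁, n₂))` of the diagonal functor of the simplex category. -/
abbrev DiagCostructuredArrow (n₁ n₂ : SimplexCategory) :=
  CostructuredArrow (Functor.diag SimplexCategory) (n₁, n₂)

namespace DiagCostructuredArrow

variable (n₁ n₂ : SimplexCategory)

/-- The lift of the cone functor which extends both maps by `0` to the apex of the cone. -/
def cone : DiagCostructuredArrow n₁ n₂ ⥤ DiagCostructuredArrow n₁ n₂ where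
  obj x := CostructuredArrow.mk (Y := coneFunctor.obj x.left)
    (Prod.mkHom (shift (n := x.left.len) x.hom.1) (shift (n := x.left.len) x.hom.2))
  map {x y} f := CostructuredArrow.homMk (coneFunctor.map f.left) <| by
    have shift_comp {k : SimplexCategory} (g : y.left ⟶ k) :
        coneFunctor.map f.left ≫ shift (n := y.left.len) g =
          shift (n := x.left.len) (f.left ≫ g) :=
      shift_comp_δ_zero_comp_shift (m := x.left.len) (n := y.left.len) f.left g
    rw [← CostructuredArrow.w f]
    exact Prod.ext (shift_comp y.hom.1) (shift_comp y.hom.2)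

/-- The lift of the inclusion of the base into the cone. -/
def inclusion : 𝟭 (DiagCostructuredArrow n₁ n₂) ⟶ cone n₁ n₂ where
  app x := CostructuredArrow.homMk (coneInclusion.app x.left)

/-- The pair of maps `[0] → [nᵢ]` with value `0`. -/
def zero : DiagCostructuredArrow n₁ n₂ :=
  CostructuredArrow.mk (Y := ⦋0⦌) (Prod.mkHom (⦋0⦌.const n₁ 0) (⦋0⦌.const n₂ 0))

/-- The lift of the inclusion of the apex into the cone. -/
def apex : (Functor.const (DiagCostructuredArrow n₁ n₂)).obj (zero n₁ n₂) ⟶ cone n₁ n₂ where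
  app x := CostructuredArrow.homMk (coneApex.app x.left)

end DiagCostructuredArrow

end Cone

/-- For every pair `([k₁],[k₂])` of objects of `Δ × Δ`, the nerve of the comma
category `(diag ↓ ([k₁],[k₂]))` of the diagonal functor `diag : Δ → Δ × Δ` is
weakly contractible; consequently the diagonal functor is initial. -/
theorem diag_comma_nerve_contractible_and_initial :
    (∀ k₁ k₂ : ℕ,
      WeaklyContractibleSSet
        (CategoryTheory.nerve
          (CostructuredArrow (Functor.diag SimplexCategory) (mk k₁, mk k₂)))) ∧
    (Functor.diag SimplexCategory).Initial := by
  refine ⟨fun k₁ k₂ ↦ ?_, ⟨fun ⟨n₁, n₂⟩ ↦ ?_⟩⟩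
  · have := contractibleSpace_toTop_nerve_of_natTrans
      (DiagCostructuredArrow.inclusion (mk k₁) (mk k₂)) (DiagCostructuredArrow.apex (mk k₁) (mk k₂))
    exact ContractibleSpace.hequiv _ _
  · exact isConnected_of_natTrans
      (DiagCostructuredArrow.inclusion n₁ n₂) (DiagCostructuredArrow.apex n₁ n₂)
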